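/- arXiv:1405.5318 — 2 statements merged into one kernel-verified Lean document; each statement's English description precedes it below -/
import Mathlib

section
/- Bäcklund transformation r3: let α0,…,α4 be complex parameters with α0+α1+2α2+α3+α4 = 1 and let q, p be holomorphic functions on an open set U ⊆ ℂ∖{0,1} solving the Hamiltonian system for the Painlevé VI Hamiltonian with parameters (α0,α1,α2,α3,α4), and suppose q is nowhere zero on U. Then the pair (t/q, −q(pq+α2)/t) solves the Hamiltonian system with parameters (α3,α4,α2,α0,α1). -/
/-- The Painlevé VI Hamiltonian. -/
noncomputable def PVIHamiltonian (α0 α1 α2 α3 α4 q p t : ℂ) : ℂ :=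
  q * (q - 1) * (q - t) * p ^ 2
    - ((α0 - 1) * q * (q - 1) + α3 * q * (q - t) + α4 * (q - 1) * (q - t)) * p
    + α2 * (α1 + α2) * (q - t)

/-- The pair `(q, p)` solves the Hamiltonian system
`t(t-1) q' = ∂H/∂p`, `t(t-1) p' = -∂H/∂q` on `U`. -/
def SolvesHamSystem (α0 α1 α2 α3 α4 : ℂ) (U : Set ℂ) (q p : ℂ → ℂ) : Prop :=
  ∀ t ∈ U,
    t * (t - 1) * deriv q t
        = deriv (fun p' => PVIHamiltonian α0 α1 α2 α3 α4 (q t) p' t) (p t) ∧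
    t * (t - 1) * deriv p t
        = - deriv (fun q' => PVIHamiltonian α0 α1 α2 α3 α4 q' (p t) t) (q t)

theorem ham_dp (a0 a1 a2 a3 a4 q p t : ℂ) :
    deriv (fun p' => PVIHamiltonian a0 a1 a2 a3 a4 q p' t) p =
      2 * q * (q - 1) * (q - t) * p
        - ((a0 - 1) * q * (q - 1) + a3 * q * (q - t) + a4 * (q - 1) * (q - t)) := by
  unfold PVIHamiltonian
  have h := (((((hasDerivAt_id p).pow 2).const_mul (q * (q - 1) * (q - t))).sub
    ((hasDerivAt_id p).const_mul
      ((a0 - 1) * q * (q - 1) + a3 * q * (q - t) + a4 * (q - 1) * (q - t)))).add_const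
        (a2 * (a1 + a2) * (q - t)))
  refine (HasDerivAt.congr_deriv h ?_).deriv
  simp
  ring

theorem ham_dq (a0 a1 a2 a3 a4 q p t : ℂ) :
    deriv (fun q' => PVIHamiltonian a0 a1 a2 a3 a4 q' p t) q =
      ((q - 1) * (q - t) + q * (q - t) + q * (q - 1)) * p ^ 2
        - ((a0 - 1) * (2 * q - 1) + a3 * (2 * q - t) + a4 * (2 * q - 1 - t)) * p
        + a2 * (a1 + a2) := by
  unfold PVIHamiltonian
  have i := hasDerivAt_id q
  have i1 := i.sub_const 1
  have it := i.sub_const t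
  have h := ((((i.mul i1).mul it).mul_const (p ^ 2)).sub
    (((((i.const_mul (a0 - 1)).mul i1).add ((i.const_mul a3).mul it)).add
      ((i1.const_mul a4).mul it)).mul_const p)).add (it.const_mul (a2 * (a1 + a2)))
  refine (HasDerivAt.congr_deriv h ?_).deriv
  simp
  ring

/-- the Bäcklund transformation r₃. -/
theorem backlund_r3
    (α0 α1 α2 α3 α4 : ℂ) (hα : α0 + α1 + 2 * α2 + α3 + α4 = 1)
    (U : Set ℂ) (hUopen : IsOpen U) (hU01 : U ⊆ ({0, 1} : Set ℂ)ᶜ)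
    (q p : ℂ → ℂ)
    (hq : DifferentiableOn ℂ q U) (hp : DifferentiableOn ℂ p U)
    (hsys : SolvesHamSystem α0 α1 α2 α3 α4 U q p)
    (hq0 : ∀ t ∈ U, q t ≠ 0) :
    SolvesHamSystem α3 α4 α2 α0 α1 U
      (fun t => t / q t) (fun t => -(q t * (p t * q t + α2)) / t) := by
  intro t ht
  obtain ⟨h1, h2⟩ := hsys t ht
  have hqt := hq0 t ht
  have ht0 : t ≠ 0 := fun h => hU01 ht (by simp [h])
  have ht1 : t - 1 ≠ 0 := fun h => hU01 ht (by simp [sub_eq_zero.mp h])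
  have dq := (hq.differentiableAt (hUopen.mem_nhds ht)).hasDerivAt
  have dp := (hp.differentiableAt (hUopen.mem_nhds ht)).hasDerivAt
  have e1 : deriv (fun t => t / q t) t = (1 * q t - t * deriv q t) / q t ^ 2 :=
    ((hasDerivAt_id t).div dq hqt).deriv
  have e2 : deriv (fun t => -(q t * (p t * q t + α2)) / t) t =
      (-(deriv q t * (p t * q t + α2) + q t * (deriv p t * q t + p t * deriv q t)) * t
        - -(q t * (p t * q t + α2)) * 1) / t ^ 2 :=
    ((dq.mul ((dp.mul dq).add_const α2)).neg.div (hasDerivAt_id t) ht0).deriv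
  rw [ham_dp] at h1
  rw [ham_dq] at h2
  rw [ham_dp, ham_dq, e1, e2]
  dsimp only
  generalize deriv q t = dqt at *
  generalize deriv p t = dpt at *
  generalize q t = x at *
  generalize p t = y at *
  clear e1 e2 dq dp
  obtain rfl : α1 = 1 - α0 - 2 * α2 - α3 - α4 := by linear_combination hα
  constructor
  · field_simp
    linear_combination (-1) * h1
  · field_simp
    linear_combination (-(2 * x * y + α2)) * h1 - x ^ 2 * h2
end

section
/- For all τ in the complex upper half-plane: φ1(τ+1) = e^{−πi/12}/(φ1(τ)φ2(τ)), φ2(τ+1) = e^{πi/6}·φ2(τ), φ3(τ+1) = e^{πi/12}·φ5(τ)³/(φ3(τ)φ4(τ)), φ4(τ+1) = e^{πi/3}·φ4(τ), and φ5(τ+1) = e^{πi/6}·φ5(τ). -/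
open Complex

/-- The theta product θ(x;p) = ∏_{j≥0} (1 - pʲx)(1 - pʲ⁺¹x⁻¹). -/
noncomputable def jtheta (x p : ℂ) : ℂ :=
  ∏' j : ℕ, ((1 - p ^ j * x) * (1 - p ^ (j + 1) * x⁻¹))

/-- Dedekind's eta function η(τ) = e^{πiτ/12} ∏_{j≥1} (1 - e^{2πijτ}). -/
noncomputable def dedekindEta (τ : ℂ) : ℂ :=
  Complex.exp ((Real.pi : ℂ) * Complex.I * τ / 12) *
    ∏' j : ℕ, (1 - Complex.exp (2 * (Real.pi : ℂ) * Complex.I * (j + 1) * τ))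

/-- The eta quotient φ₁ = η(τ/2)²/η(τ)². -/
noncomputable def phi1 (τ : ℂ) : ℂ := dedekindEta (τ / 2) ^ 2 / dedekindEta τ ^ 2

/-- The eta quotient φ₂ = η(2τ)²/η(τ)². -/
noncomputable def phi2 (τ : ℂ) : ℂ := dedekindEta (2 * τ) ^ 2 / dedekindEta τ ^ 2

/-- The eta quotient φ₃ = η(3τ/2)/η(τ/2). -/
noncomputable def phi3 (τ : ℂ) : ℂ := dedekindEta (3 * τ / 2) / dedekindEta (τ / 2)

/-- The eta quotient φ₄ = η(6τ)/η(2τ). -/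
noncomputable def phi4 (τ : ℂ) : ℂ := dedekindEta (6 * τ) / dedekindEta (2 * τ)

/-- The eta quotient φ₅ = η(3τ)/η(τ). -/
noncomputable def phi5 (τ : ℂ) : ℂ := dedekindEta (3 * τ) / dedekindEta τ

noncomputable def eulP (q : ℂ) : ℂ := ∏' n : ℕ, (1 - q ^ (n + 1))
noncomputable def eulO (q : ℂ) : ℂ := ∏' n : ℕ, (1 - q ^ (2 * n + 1))

lemma eulO_mult {q : ℂ} (hq : ‖q‖ < 1) : Multipliable fun n : ℕ ↦ 1 - q ^ (2 * n + 1) := by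
  apply multipliable_one_add_of_summable (f := fun n ↦ -q ^ (2 * n + 1))
  have h := (summable_nat_add_iff 1).mpr (summable_geometric_of_lt_one (norm_nonneg _) hq)
  have h2 := h.comp_injective (i := fun n : ℕ => 2 * n) (fun a b h => by simpa using h)
  simpa [Function.comp_def] using h2

lemma norm_sq_lt {q : ℂ} (hq : ‖q‖ < 1) : ‖q ^ 2‖ < 1 := by
  rw [norm_pow]; exact pow_lt_one₀ (norm_nonneg _) hq (by norm_num)

lemma eulP_split {q : ℂ} (hq : ‖q‖ < 1) : eulP q = eulO q * eulP (q ^ 2) := by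
  have e : ∀ n : ℕ, 1 - (q ^ 2) ^ (n + 1) = 1 - q ^ (2 * n + 1 + 1) := fun n => by
    rw [← pow_mul]; ring_nf
  have h := ModularForm.multipliable_one_sub_pow (norm_sq_lt hq)
  simp only [e] at h
  unfold eulP eulO
  simp only [e]
  exact (tprod_even_mul_odd (f := fun n : ℕ => 1 - q ^ (n + 1)) (eulO_mult hq) h).symm

lemma eulO_neg {q : ℂ} (hq : ‖q‖ < 1) : eulO q * eulO (-q) = eulO (q ^ 2) := by
  unfold eulO
  rw [← (eulO_mult hq).tprod_mul (eulO_mult (q := -q) (by simpa using hq))]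
  congr 1; ext n
  rw [Odd.neg_pow ⟨n, rfl⟩]; ring

lemma eulP_neg {q : ℂ} (hq : ‖q‖ < 1) :
    eulP (-q) * (eulP q * eulP (q ^ 4)) = eulP (q ^ 2) ^ 3 := by
  have h1 := eulP_split hq
  have h2 := eulP_split (q := -q) (by simpa using hq)
  have h3 := eulP_split (norm_sq_lt hq)
  have h4 := eulO_neg hq
  rw [neg_sq] at h2
  rw [← pow_mul] at h3
  norm_num at h3
  rw [h1, h2]
  linear_combination eulP (q ^ 2) ^ 2 * eulP (q ^ 4) * h4 - eulP (q ^ 2) ^ 2 * h3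

lemma eta_eq (τ : ℂ) : dedekindEta τ =
    Complex.exp ((Real.pi : ℂ) * Complex.I * τ / 12) *
      eulP (Complex.exp (2 * (Real.pi : ℂ) * Complex.I * τ)) := by
  unfold dedekindEta eulP
  congr 2; ext n
  rw [← Complex.exp_nat_mul]; push_cast; ring_nf

lemma eta_ne {τ : ℂ} (hτ : 0 < τ.im) : dedekindEta τ ≠ 0 := by
  have h := ModularForm.eta_tprod_ne_zero (z := τ) hτ
  simp only [ModularForm.eta_q_eq_cexp] at h
  exact mul_ne_zero (Complex.exp_ne_zero _) h

lemma eta_add_one (τ : ℂ) :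
    dedekindEta (τ + 1) = Complex.exp ((Real.pi : ℂ) * Complex.I / 12) * dedekindEta τ := by
  rw [eta_eq, eta_eq, ← mul_assoc, ← Complex.exp_add]
  congr 2
  · ring
  · rw [mul_add, Complex.exp_add, mul_one, Complex.exp_two_pi_mul_I, mul_one]

lemma eta_add_nat (τ : ℂ) (n : ℕ) :
    dedekindEta (τ + n) = Complex.exp ((Real.pi : ℂ) * Complex.I / 12) ^ n * dedekindEta τ := by
  induction n with
  | zero => simp
  | succ k ih => push_cast; rw [← add_assoc, eta_add_one, ih]; ring

lemma eta_half {τ : ℂ} (hτ : 0 < τ.im) :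
    dedekindEta ((τ + 1) / 2) = Complex.exp ((Real.pi : ℂ) * Complex.I / 24) * dedekindEta τ ^ 3
      / (dedekindEta (τ / 2) * dedekindEta (2 * τ)) := by
  have n1 : dedekindEta (τ / 2) ≠ 0 := eta_ne (by simpa using hτ)
  have n2 : dedekindEta (2 * τ) ≠ 0 := eta_ne (by simpa using hτ)
  rw [eq_div_iff (mul_ne_zero n1 n2)]
  set q := Complex.exp ((Real.pi : ℂ) * Complex.I * τ) with hqd
  have hq : ‖q‖ < 1 := by
    rw [hqd, Complex.norm_exp, Real.exp_lt_one_iff]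
    simp
    positivity
  have e1 : Complex.exp (2 * (Real.pi : ℂ) * Complex.I * ((τ + 1) / 2)) = -q := by
    rw [show 2 * (Real.pi : ℂ) * Complex.I * ((τ + 1) / 2) =
      Real.pi * Complex.I * τ + Real.pi * Complex.I by ring, Complex.exp_add, Complex.exp_pi_mul_I]
    ring
  have e2 : Complex.exp (2 * (Real.pi : ℂ) * Complex.I * (τ / 2)) = q := by
    rw [hqd]; ring_nf
  have e3 : Complex.exp (2 * (Real.pi : ℂ) * Complex.I * τ) = q ^ 2 := by
    rw [hqd, ← Complex.exp_nat_mul]; push_cast; ring_nf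
  have e4 : Complex.exp (2 * (Real.pi : ℂ) * Complex.I * (2 * τ)) = q ^ 4 := by
    rw [hqd, ← Complex.exp_nat_mul]; push_cast; ring_nf
  rw [eta_eq ((τ + 1) / 2), eta_eq (τ / 2), eta_eq τ, eta_eq (2 * τ), e1, e2, e3, e4, mul_pow,
    ← eulP_neg hq]
  have key : Complex.exp ((Real.pi : ℂ) * Complex.I * ((τ + 1) / 2) / 12) *
      (Complex.exp ((Real.pi : ℂ) * Complex.I * (τ / 2) / 12) *
      Complex.exp ((Real.pi : ℂ) * Complex.I * (2 * τ) / 12)) =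
      Complex.exp ((Real.pi : ℂ) * Complex.I / 24) *
        Complex.exp ((Real.pi : ℂ) * Complex.I * τ / 12) ^ 3 := by
    rw [← Complex.exp_nat_mul, ← Complex.exp_add, ← Complex.exp_add, ← Complex.exp_add]
    congr 1; push_cast; ring
  linear_combination eulP (-q) * (eulP q * eulP (q ^ 4)) * key

/-- transformation of the eta quotients under T(τ) = τ + 1. -/
theorem phi_transformation_under_T (τ : ℂ) (hτ : 0 < τ.im) :
    phi1 (τ + 1) = Complex.exp (-(Real.pi : ℂ) * Complex.I / 12) / (phi1 τ * phi2 τ) ∧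
    phi2 (τ + 1) = Complex.exp ((Real.pi : ℂ) * Complex.I / 6) * phi2 τ ∧
    phi3 (τ + 1) = Complex.exp ((Real.pi : ℂ) * Complex.I / 12) * phi5 τ ^ 3
        / (phi3 τ * phi4 τ) ∧
    phi4 (τ + 1) = Complex.exp ((Real.pi : ℂ) * Complex.I / 3) * phi4 τ ∧
    phi5 (τ + 1) = Complex.exp ((Real.pi : ℂ) * Complex.I / 6) * phi5 τ := by
  have h3 : 0 < (3 * τ).im := by simpa using hτ
  have n0 := eta_ne hτ
  have n1 : dedekindEta (τ / 2) ≠ 0 := eta_ne (by simpa using hτ)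
  have n2 : dedekindEta (2 * τ) ≠ 0 := eta_ne (by simpa using hτ)
  have n3 : dedekindEta (3 * τ) ≠ 0 := eta_ne h3
  have n4 : dedekindEta (3 * τ / 2) ≠ 0 := eta_ne (by simpa using hτ)
  have n6 : dedekindEta (6 * τ) ≠ 0 := eta_ne (by simpa using hτ)
  have a2 := eta_add_nat (2 * τ) 2
  have a3 := eta_add_nat (3 * τ) 3
  have a6 := eta_add_nat (6 * τ) 6
  have b := eta_half hτ
  have c := eta_half h3
  rw [show 2 * (3 * τ) = 6 * τ by ring] at c
  have d := eta_add_one ((3 * τ + 1) / 2)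
  rw [c, show (3 * τ + 1) / 2 + 1 = 3 * (τ + 1) / 2 by ring] at d
  rw [show 2 * τ + (2 : ℕ) = 2 * (τ + 1) by push_cast; ring] at a2
  rw [show 3 * τ + (3 : ℕ) = 3 * (τ + 1) by push_cast; ring] at a3
  rw [show 6 * τ + (6 : ℕ) = 6 * (τ + 1) by push_cast; ring] at a6
  have x12 : Complex.exp ((Real.pi : ℂ) * Complex.I / 12) =
      Complex.exp ((Real.pi : ℂ) * Complex.I / 24) ^ 2 := by
    rw [← Complex.exp_nat_mul]; push_cast; ring_nf
  have x6 : Complex.exp ((Real.pi : ℂ) * Complex.I / 6) =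
      Complex.exp ((Real.pi : ℂ) * Complex.I / 24) ^ 4 := by
    rw [← Complex.exp_nat_mul]; push_cast; ring_nf
  have x3 : Complex.exp ((Real.pi : ℂ) * Complex.I / 3) =
      Complex.exp ((Real.pi : ℂ) * Complex.I / 24) ^ 8 := by
    rw [← Complex.exp_nat_mul]; push_cast; ring_nf
  have xm : Complex.exp (-(Real.pi : ℂ) * Complex.I / 12) =
      (Complex.exp ((Real.pi : ℂ) * Complex.I / 24) ^ 2)⁻¹ := by
    rw [← Complex.exp_nat_mul, ← Complex.exp_neg]; push_cast; ring_nf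
  have ne := Complex.exp_ne_zero ((Real.pi : ℂ) * Complex.I / 24)
  unfold phi1 phi2 phi3 phi4 phi5
  rw [a2, a3, a6, b, d, eta_add_one, x12, x6, x3, xm]
  generalize Complex.exp ((Real.pi : ℂ) * Complex.I / 24) = w at *
  refine ⟨?_, ?_, ?_, ?_, ?_⟩ <;> field_simp
end
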